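/- For λ > −1, t ∈ ℝ and integer m ≥ 2, let P_n be the monic orthogonal polynomials of the generalised higher order Freud weight with recurrence coefficients β_n and even moments μ_{2k}(t,λ). Define polynomials C_n(x), D_n(x) recursively by C₀(x) = −1 + 2(t x² − m x^{2m} + λ + 1), D_{−1}(x) = 0, D₀(x) = 2x ( m Σ_{j=1}^{m} μ_{2j−2}(t,λ) x^{2m−2j} − t μ₀(t,λ) ), C_{n+1}(x) = −C_n(x) + (2x/β_n) D_n(x), and D_{n+1}(x) = −x + (β_n/β_{n−1}) D_{n−1}(x) + (x²/β_n) D_n(x) − x C_n(x). Then for every n ≥ 0 the polynomial P_{n+1} satisfies the second-order linear differential equation J(x;n) P_{n+1}″(x) + K(x;n) P_{n+1}′(x) + L(x;n) P_{n+1}(x) = 0, where J(x;n) = x D_{n+1}(x), K(x;n) = C₀(x) D_{n+1}(x) − x D_{n+1}′(x) + D_{n+1}(x), and L(x;n) = 𝒲( (C_{n+1}(x) − C₀(x))/2 , D_{n+1}(x) ) − D_{n+1}(x) Σ_{j=0}^{n} D_j(x)/β_j, with 𝒲(f,g) = f g′ − f′ g. -/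

import Mathlib

open MeasureTheory Real Polynomial

/-- The generalised higher order Freud weight `ω(x;t,λ) = |x|^{2λ+1} exp(t x² − x^{2m})`. -/
noncomputable def freudWeight (m : ℕ) (lam t x : ℝ) : ℝ :=
  |x| ^ (2 * lam + 1) * Real.exp (t * x ^ 2 - x ^ (2 * m))

/-- The `k`-th moment `μ_k(t,λ)` of the generalised higher order Freud weight. -/
noncomputable def freudMoment (m : ℕ) (lam t : ℝ) (k : ℕ) : ℝ :=
  ∫ x : ℝ, x ^ k * freudWeight m lam t x

/-! Put `C_n = C₀ + 2 G_n` and `D_n = β_n E_n`. In terms of `G` and `E` the two recursions are the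
compatibility conditions of the Chen–Ismail ladder operators. By induction they carry the relations
`x P_{n+1}′ = G_{n+1} P_{n+1} − D_{n+1} P_n` and `x P_n′ = −(G_{n+1} + C₀) P_n + E_n P_{n+1}` from `n`
to `n + 1`, and they telescope to `G_{n+1} (G_{n+1} + C₀) − D_{n+1} E_n = x ∑_{j ≤ n} E_j`.
Eliminating `P_n` from the first relation and its derivative, and using the last identity to simplify
the coefficient of `P_{n+1}`, gives `x` times the differential equation. -/

theorem second_order_ode_of_first_order_system {R : Type*} [CommRing R] {p q c g d e s : R[X]}
    (hp : X * derivative p = g * p - d * q) (hq : X * derivative q = -(g + c) * q + e * p)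
    (hs : g * (g + c) - d * e = X * s) :
    X * d * derivative (derivative p) + (c * d - X * derivative d + d) * derivative p
      + (wronskian g d - d * s) * p = 0 := by
  have hp_deriv : derivative p + X * derivative (derivative p)
      = derivative g * p + g * derivative p - (derivative d * q + d * derivative q) := by
    simpa only [derivative_mul, derivative_sub, derivative_X, one_mul] using congrArg derivative hp
  rw [wronskian]
  refine isRegular_X.left ?_
  -- `hp_deriv` supplies `p″`; then `hq` removes `q′` and `hp` removes `q`.
  linear_combination X * d * hp_deriv - d ^ 2 * hq
    + (d * (g + c) - X * derivative d) * hp + d * p * hs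

/-- The compatibility conditions `(S₁)`, `(S₂)` of the Chen–Ismail ladder operators
`P_n′ = −B_n P_n + β_n A_n P_{n−1}` of an even weight `exp (−v)`, cleared of denominators:
`G n = −x B_n`, `E n = −x A_n` and `c = −x v′`. The case `n = 0` of `(S₂)` is a separate field
because it has no term `E (n − 1)`. -/
structure IsLadderPair {R : Type*} [CommRing R] (β : ℕ → R) (c : R[X]) (G E : ℕ → R[X]) :
    Prop where
  zero : G 0 = 0
  add_succ : ∀ n, G (n + 1) + G n + c = X * E n
  sub_zero : X * (G 1 - G 0) - X = C (β 1) * E 1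
  sub_succ : ∀ n,
    X * (G (n + 2) - G (n + 1)) - X = C (β (n + 2)) * E (n + 2) - C (β (n + 1)) * E n

namespace IsLadderPair

variable {R : Type*} [CommRing R] {β : ℕ → R} {c : R[X]} {G E P : ℕ → R[X]}

theorem structure_relations (h : IsLadderPair β c G E) (hP0 : P 0 = 1) (hP1 : P 1 = X)
    (hP : ∀ n, P (n + 2) = X * P (n + 1) - C (β (n + 1)) * P n) (n : ℕ) :
    X * derivative (P (n + 1)) = G (n + 1) * P (n + 1) - C (β (n + 1)) * E (n + 1) * P n ∧
      X * derivative (P n) = -(G (n + 1) + c) * P n + E n * P (n + 1) := by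
  induction n with
  | zero =>
    simp only [zero_add, hP0, hP1, derivative_X, derivative_one]
    constructor
    · linear_combination -h.sub_zero - X * h.zero
    · linear_combination h.add_succ 0 - h.zero
  | succ n ih =>
    obtain ⟨lower, raise⟩ := ih
    have hP_deriv : derivative (P (n + 2))
        = P (n + 1) + X * derivative (P (n + 1)) - C (β (n + 1)) * derivative (P n) := by
      simp only [hP, derivative_sub, derivative_mul, derivative_X, derivative_C, one_mul,
        zero_mul, zero_add]
    constructor
    · linear_combination X * hP_deriv + X * lower - C (β (n + 1)) * raise - G (n + 2) * hP n
        - P (n + 1) * h.sub_succ n + C (β (n + 1)) * P n * h.add_succ (n + 1)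
    · linear_combination lower - E (n + 1) * hP n + P (n + 1) * h.add_succ (n + 1)

theorem mul_add_sub_eq_X_mul_sum (h : IsLadderPair β c G E) (n : ℕ) :
    G (n + 1) * (G (n + 1) + c) - C (β (n + 1)) * E (n + 1) * E n
      = X * ∑ j ∈ Finset.range (n + 1), E j := by
  induction n with
  | zero =>
    simp only [zero_add, Finset.sum_range_one]
    linear_combination G 1 * h.add_succ 0 + E 0 * h.sub_zero + (E 0 * X - G 1) * h.zero
  | succ n ih =>
    rw [Finset.sum_range_succ]
    linear_combination ih + (G (n + 2) - G (n + 1)) * h.add_succ (n + 1) + E (n + 1) * h.sub_succ n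

theorem second_order_equation (h : IsLadderPair β c G E) (hP0 : P 0 = 1) (hP1 : P 1 = X)
    (hP : ∀ n, P (n + 2) = X * P (n + 1) - C (β (n + 1)) * P n) {d : R[X]} (n : ℕ)
    (hd : C (β (n + 1)) * E (n + 1) = d) :
    X * d * derivative (derivative (P (n + 1)))
      + (c * d - X * derivative d + d) * derivative (P (n + 1))
      + (wronskian (G (n + 1)) d - d * ∑ j ∈ Finset.range (n + 1), E j) * P (n + 1) = 0 := by
  subst hd
  obtain ⟨lower, raise⟩ := h.structure_relations hP0 hP1 hP n
  exact second_order_ode_of_first_order_system lower raise (h.mul_add_sub_eq_X_mul_sum n)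

end IsLadderPair

section Recursion

variable {K : Type*} [Field K] [NeZero (2 : K)] {β : ℕ → K} {P Cp D : ℕ → K[X]}

theorem isLadderPair_of_recursion (hβ : ∀ n, β n ≠ 0)
    (hCrec : ∀ n, Cp (n + 1) = -Cp n + C (2 / β n) * X * D n)
    (hD1 : D 1 = -X + C (β 0)⁻¹ * X ^ 2 * D 0 - X * Cp 0)
    (hDrec : ∀ n, 1 ≤ n → D (n + 1) = -X + C (β n / β (n - 1)) * D (n - 1)
      + C (β n)⁻¹ * X ^ 2 * D n - X * Cp n) :
    IsLadderPair β (Cp 0) (fun n ↦ C (1 / 2) * (Cp n - Cp 0)) (fun n ↦ C (β n)⁻¹ * D n) := by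
  have half_mul_two : (C (1 / 2) * 2 : K[X]) = 1 := by
    rw [← C_ofNat, ← C_mul, one_div_mul_cancel two_ne_zero, C_1]
  have C_mul_C_inv (n) : C (β n) * C (β n)⁻¹ = 1 := by rw [← C_mul, mul_inv_cancel₀ (hβ n), C_1]
  have half_sub (n) : C (1 / 2) * (Cp (n + 1) - Cp n) = X * (C (β n)⁻¹ * D n) - Cp n := by
    rw [hCrec, div_eq_mul_inv (2 : K), C_mul, C_ofNat]
    linear_combination (X * (C (β n)⁻¹ * D n) - Cp n) * half_mul_two
  constructor
  · rw [sub_self, mul_zero]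
  · intro n
    linear_combination half_sub n + (Cp n - Cp 0) * half_mul_two
  · linear_combination X * half_sub 0 - hD1 - D 1 * C_mul_C_inv 1
  · intro n
    have hD := hDrec (n + 1) n.succ_pos
    rw [Nat.add_sub_cancel, div_eq_mul_inv, C_mul] at hD
    linear_combination X * half_sub (n + 1) - hD - D (n + 2) * C_mul_C_inv (n + 2)

theorem second_order_ode_general (hβ : ∀ n, β n ≠ 0) (hP0 : P 0 = 1) (hP1 : P 1 = X)
    (hrec : ∀ n, 1 ≤ n → P (n + 1) = X * P n - C (β n) * P (n - 1))
    (hCrec : ∀ n, Cp (n + 1) = -Cp n + C (2 / β n) * X * D n)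
    (hD1 : D 1 = -X + C (β 0)⁻¹ * X ^ 2 * D 0 - X * Cp 0)
    (hDrec : ∀ n, 1 ≤ n → D (n + 1) = -X + C (β n / β (n - 1)) * D (n - 1)
      + C (β n)⁻¹ * X ^ 2 * D n - X * Cp n) (n : ℕ) :
    X * D (n + 1) * derivative (derivative (P (n + 1)))
      + (Cp 0 * D (n + 1) - X * derivative (D (n + 1)) + D (n + 1)) * derivative (P (n + 1))
      + (wronskian (C (1 / 2) * (Cp (n + 1) - Cp 0)) (D (n + 1))
          - D (n + 1) * ∑ j ∈ Finset.range (n + 1), C (β j)⁻¹ * D j) * P (n + 1) = 0 := by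
  refine (isLadderPair_of_recursion hβ hCrec hD1 hDrec).second_order_equation hP0 hP1
    (fun k ↦ hrec (k + 1) k.succ_pos) n ?_
  rw [← mul_assoc, ← C_mul, mul_inv_cancel₀ (hβ _), C_1, one_mul]

end Recursion

/-- For `λ > −1`, `t ∈ ℝ` and integer `m ≥ 2`, with `C_n, D_n` defined by the
stated recursions, every monic orthogonal polynomial `P_{n+1}` of the generalised higher order
Freud weight satisfies the second-order linear differential equation
`J(x;n) P_{n+1}″ + K(x;n) P_{n+1}′ + L(x;n) P_{n+1} = 0` with
`J = x D_{n+1}`, `K = C₀ D_{n+1} − x D_{n+1}′ + D_{n+1}` and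
`L = 𝒲((C_{n+1} − C₀)/2, D_{n+1}) − D_{n+1} Σ_{j=0}^{n} D_j/β_j`. -/
theorem second_order_ode (m : ℕ) (hm : 2 ≤ m) (lam t : ℝ) (hlam : -1 < lam)
    (P : ℕ → Polynomial ℝ) (β : ℕ → ℝ) (Cp D : ℕ → Polynomial ℝ)
    (hmonic : ∀ n, (P n).Monic) (hdeg : ∀ n, (P n).natDegree = n)
    (horth : ∀ j k, j ≠ k →
      ∫ x : ℝ, (P j).eval x * (P k).eval x * freudWeight m lam t x = 0)
    (hβpos : ∀ n, 0 < β n)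
    (hP0 : P 0 = 1) (hP1 : P 1 = X)
    (hrec : ∀ n, 1 ≤ n → P (n + 1) = X * P n - C (β n) * P (n - 1))
    -- `C₀(x) = −1 + 2(t x² − m x^{2m} + λ + 1)`
    (hC0 : Cp 0 = Polynomial.C (2 * lam + 1) + Polynomial.C (2 * t) * X ^ 2
      - Polynomial.C (2 * (m : ℝ)) * X ^ (2 * m))
    -- `D₀(x) = 2x (m Σ_{j=1}^{m} μ_{2j−2} x^{2m−2j} − t μ₀)`
    (hD0 : D 0 = Polynomial.C 2 * X *
      (Polynomial.C (m : ℝ) *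
          (∑ j ∈ Finset.range m, Polynomial.C (freudMoment m lam t (2 * j)) * X ^ (2 * m - 2 * j - 2))
        - Polynomial.C (t * freudMoment m lam t 0)))
    -- `C_{n+1}(x) = −C_n(x) + (2x/β_n) D_n(x)`
    (hCrec : ∀ n, Cp (n + 1) = -Cp n + Polynomial.C (2 / β n) * X * D n)
    -- `D₁(x) = −x + (x²/β₀) D₀(x) − x C₀(x)`  (the term with `D_{−1} = 0` is absent)
    (hD1 : D 1 = -X + Polynomial.C (β 0)⁻¹ * X ^ 2 * D 0 - X * Cp 0)
    -- `D_{n+1}(x) = −x + (β_n/β_{n−1}) D_{n−1}(x) + (x²/β_n) D_n(x) − x C_n(x)`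
    (hDrec : ∀ n, 1 ≤ n → D (n + 1) = -X + Polynomial.C (β n / β (n - 1)) * D (n - 1)
      + Polynomial.C (β n)⁻¹ * X ^ 2 * D n - X * Cp n) :
    ∀ n : ℕ,
      (X * D (n + 1)) * derivative (derivative (P (n + 1)))
        + (Cp 0 * D (n + 1) - X * derivative (D (n + 1)) + D (n + 1)) * derivative (P (n + 1))
        + ((Polynomial.C (1 / 2 : ℝ) * (Cp (n + 1) - Cp 0) * derivative (D (n + 1))
              - derivative (Polynomial.C (1 / 2 : ℝ) * (Cp (n + 1) - Cp 0)) * D (n + 1))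
            - D (n + 1) * ∑ j ∈ Finset.range (n + 1), Polynomial.C (β j)⁻¹ * D j)
          * P (n + 1) = 0 := by
  exact second_order_ode_general (fun n ↦ (hβpos n).ne') hP0 hP1 hrec hCrec hD1 hDrec
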